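/- arXiv:1411.4796 — 2 statements merged into one kernel-verified Lean document; each statement's English description precedes it below -/
import Mathlib

section
/- Let F_l be the free group on generators z₁, …, z_l, let α : F_l → F₂ be the homomorphism with α(z_i) = c^i d c^{−i} into the free group F₂ on generators c, d, and let f : F₂ → SL(2, ℤ) be the homomorphism with f(c) = [[1, 2], [0, 1]] and f(d) = [[1, 0], [2, 1]]. For every w ∈ F_l, if the matrix M = f(α(w)) satisfies M · (0, 1)ᵀ = (0, 1)ᵀ, then M is the 2×2 identity matrix. -/
/-- The free group on two generators `c, d`, with `c = FreeGroup.of false` and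
`d = FreeGroup.of true`. -/
abbrev F2 : Type := FreeGroup Bool

/-- The group homomorphism `α : F_l → F₂` determined on the generators by
`α(z_i) = c^i d c^{−i}` for `1 ≤ i ≤ l`. -/
noncomputable def alphaHom (l : ℕ) : FreeGroup (Fin l) →* F2 :=
  FreeGroup.lift fun i : Fin l =>
    (FreeGroup.of false) ^ ((i : ℕ) + 1) * FreeGroup.of true *
      ((FreeGroup.of false) ^ ((i : ℕ) + 1))⁻¹

/-- The matrix `[[1, 2], [0, 1]]` as an element of `SL(2, ℤ)`. -/
def cMat : Matrix.SpecialLinearGroup (Fin 2) ℤ :=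
  ⟨!![1, 2; 0, 1], by norm_num [Matrix.det_fin_two_of]⟩

/-- The matrix `[[1, 0], [2, 1]]` as an element of `SL(2, ℤ)`. -/
def dMat : Matrix.SpecialLinearGroup (Fin 2) ℤ :=
  ⟨!![1, 0; 2, 1], by norm_num [Matrix.det_fin_two_of]⟩

/-- The group homomorphism `f : F₂ → SL(2, ℤ)` determined by `f(c) = [[1, 2], [0, 1]]` and
`f(d) = [[1, 0], [2, 1]]`. -/
noncomputable def fHom : F2 →* Matrix.SpecialLinearGroup (Fin 2) ℤ :=
  FreeGroup.lift fun b : Bool => if b then dMat else cMat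

/-!
The conjugate `c ^ k d c ^ (-k)` is the parabolic matrix `v ↦ v + 2 (v₀ - 2k v₁) (2k, 1)`, which
fixes the slope `v₀ / v₁ = 2k`. Each of its nontrivial powers sends every slope outside
`[2k - 1, 2k + 1]` into the open interval `(2k - 1, 2k + 1)`. These open intervals are disjoint
for different `k`, so they form a ping-pong table, and the slope `0` of `(0, 1)` lies outside all
of them when `k ≥ 1`. A nontrivial reduced word therefore moves this slope into one of the
intervals, and in particular does not fix `(0, 1)`.
-/

open Matrix Monoid
open scoped Pointwise MatrixGroups

section PingPong

variable {ι G α : Type*} [Group G] [MulAction G α]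

theorem exists_neWord_prod_eq {H : ι → Type*} [∀ i, Group (H i)] {w : CoprodI H} (hw : w ≠ 1) :
    ∃ (i j : ι) (u : CoprodI.NeWord H i j), u.prod = w := by
  classical
  obtain ⟨w, rfl⟩ := CoprodI.Word.equiv.symm.surjective w
  have hne : w ≠ CoprodI.Word.empty := by
    rintro rfl
    exact hw CoprodI.Word.prod_empty
  obtain ⟨i, j, u, rfl⟩ := CoprodI.NeWord.of_word w hne
  exact ⟨i, j, u, rfl⟩

theorem lift_neWord_prod_smul_mem_of_ping_pong {H : ι → Type*} [∀ i, Group (H i)]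
    (f : ∀ i, H i →* G) (X : ι → Set α)
    (hpp : Pairwise fun i j ↦ ∀ h : H i, h ≠ 1 → f i h • X j ⊆ X i) {x : α}
    (hx : ∀ i, ∀ h : H i, h ≠ 1 → f i h • x ∈ X i) {i j : ι} (w : CoprodI.NeWord H i j) :
    CoprodI.lift f w.prod • x ∈ X i := by
  induction w with
  | singleton h hh => simpa using hx _ h hh
  | append w₁ hne w₂ _ ih₂ =>
    rw [CoprodI.NeWord.append_prod, map_mul, mul_smul]
    exact CoprodI.lift_word_ping_pong f X hpp w₁ hne (Set.smul_mem_smul_set ih₂)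

theorem freeGroup_eq_one_of_lift_smul_eq_of_ping_pong (a : ι → G) (X : ι → Set α)
    (hpp : Pairwise fun i j ↦ ∀ n : ℤ, n ≠ 0 → a i ^ n • X j ⊆ X i) {x : α}
    (hxX : ∀ i, x ∉ X i) (hx : ∀ i, ∀ n : ℤ, n ≠ 0 → a i ^ n • x ∈ X i) {w : FreeGroup ι}
    (hw : FreeGroup.lift a w • x = x) : w = 1 := by
  let f (i : ι) : FreeGroup Unit →* G := FreeGroup.lift fun _ ↦ a i
  have lift_eq : FreeGroup.lift a = (CoprodI.lift f).comp freeGroupEquivCoprodI.toMonoidHom := by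
    ext i
    simp [f]
  have exists_zpow (i : ι) (h : FreeGroup Unit) (hh : h ≠ 1) :
      ∃ n : ℤ, n ≠ 0 ∧ f i h = a i ^ n := by
    obtain ⟨n, rfl⟩ := FreeGroup.freeGroupUnitEquivInt.symm.surjective h
    exact ⟨n, by rintro rfl; exact hh rfl, by simp [f, FreeGroup.freeGroupUnitEquivInt]⟩
  by_contra hne
  obtain ⟨i, j, u, hu⟩ :=
    exists_neWord_prod_eq ((map_ne_one_iff _ freeGroupEquivCoprodI.injective).2 hne)
  refine hxX i ?_
  rw [← hw, lift_eq, MonoidHom.comp_apply, MulEquiv.toMonoidHom_eq_coe, MonoidHom.coe_coe, ← hu]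
  refine lift_neWord_prod_smul_mem_of_ping_pong f X (fun i j hij h hh ↦ ?_) (fun i h hh ↦ ?_) u
  · obtain ⟨n, hn, hfn⟩ := exists_zpow i h hh
    exact hfn ▸ hpp hij n hn
  · obtain ⟨n, hn, hfn⟩ := exists_zpow i h hh
    exact hfn ▸ hx i n hn

end PingPong

section Parabolic

variable {R : Type*} [CommRing R]

/-- The one-parameter group of parabolic matrices fixing `(x, 1)`: the parameter `m` acts by
`v ↦ v + m (v₀ - x v₁) (x, 1)`. -/
def parabolic (x : R) : AddChar R SL(2, R) where
  toFun m := ⟨!![1 + m * x, -(m * x ^ 2); m, 1 - m * x], by rw [det_fin_two_of]; ring⟩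
  map_zero_eq_one' := by ext i j; fin_cases i <;> fin_cases j <;> simp
  map_add_eq_mul' m n := by
    refine Subtype.ext (Eq.trans ?_ (Matrix.SpecialLinearGroup.coe_mul _ _).symm)
    rw [mul_fin_two]
    ring_nf

theorem coe_parabolic (x m : R) :
    (parabolic x m : Matrix (Fin 2) (Fin 2) R) = !![1 + m * x, -(m * x ^ 2); m, 1 - m * x] :=
  rfl

theorem parabolic_smul_apply_one (x m : R) (v : Fin 2 → R) :
    (parabolic x m • v) 1 = v 1 + m * (v 0 - x * v 1) := by
  simp only [Matrix.SpecialLinearGroup.smul_def, coe_parabolic, smul_eq_mulVec, mulVec,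
    vec2_dotProduct, of_apply, cons_val_zero, cons_val_one]
  ring

theorem parabolic_smul_apply_zero_sub (x m : R) (v : Fin 2 → R) :
    (parabolic x m • v) 0 - x * (parabolic x m • v) 1 = v 0 - x * v 1 := by
  simp only [Matrix.SpecialLinearGroup.smul_def, coe_parabolic, smul_eq_mulVec, mulVec,
    vec2_dotProduct, of_apply, cons_val_zero, cons_val_one]
  ring

variable [LinearOrder R]

/-- The vectors whose slope `v 0 / v 1` lies in the open interval of radius `r` around `x`,
with denominators cleared. -/
def slopeInterval (x r : R) : Set (Fin 2 → R) :=
  {v | |v 0 - x * v 1| < r * |v 1|}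

theorem mem_slopeInterval {x r : R} {v : Fin 2 → R} :
    v ∈ slopeInterval x r ↔ |v 0 - x * v 1| < r * |v 1| :=
  Iff.rfl

variable [IsStrictOrderedRing R]

theorem mul_abs_lt_of_mem_slopeInterval {x y r s : R} (hxy : r + s ≤ |x - y|) {v : Fin 2 → R}
    (hv : v ∈ slopeInterval y s) : r * |v 1| < |v 0 - x * v 1| := by
  rw [mem_slopeInterval] at hv
  have triangle : |x - y| * |v 1| ≤ |v 0 - x * v 1| + |v 0 - y * v 1| := by
    rw [← abs_mul, sub_mul, abs_sub_comm (v 0)]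
    exact abs_sub_le _ _ _
  linarith [mul_le_mul_of_nonneg_right hxy (abs_nonneg (v 1))]

theorem parabolic_smul_mem_slopeInterval {x m r : R} (hrm : 2 ≤ r * |m|) {v : Fin 2 → R}
    (hv : r * |v 1| < |v 0 - x * v 1|) : parabolic x m • v ∈ slopeInterval x r := by
  have hr : 0 < r := pos_of_mul_pos_left (two_pos.trans_le hrm) (abs_nonneg m)
  rw [mem_slopeInterval, parabolic_smul_apply_zero_sub, parabolic_smul_apply_one]
  generalize v 0 - x * v 1 = q at hv ⊢
  calc |q| < 2 * |q| - r * |v 1| := by linarith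
    _ ≤ r * |m| * |q| - r * |v 1| := by gcongr
    _ = r * (|m * q| - |v 1|) := by rw [abs_mul]; ring
    _ ≤ r * |v 1 + m * q| := by
      gcongr
      rw [add_comm]
      exact abs_sub_abs_le_abs_add _ _

theorem parabolic_zpow_smul_mem_slopeInterval {x m r : R} (hrm : 2 ≤ r * |m|) {v : Fin 2 → R}
    (hv : r * |v 1| < |v 0 - x * v 1|) {n : ℤ} (hn : n ≠ 0) :
    parabolic x m ^ n • v ∈ slopeInterval x r := by
  rw [← AddChar.map_zsmul_eq_zpow]
  refine parabolic_smul_mem_slopeInterval ?_ hv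
  have hn' : (1 : R) ≤ |(n : R)| := mod_cast Int.one_le_abs hn
  calc 2 ≤ r * |m| := hrm
    _ ≤ |(n : R)| * (r * |m|) := le_mul_of_one_le_left (two_pos.le.trans hrm) hn'
    _ = r * |n • m| := by rw [zsmul_eq_mul, abs_mul]; ring

theorem fixes_basis_vector_implies_identity_general {ι : Type*} {x m r : ι → R}
    (hx : Pairwise fun i j ↦ r i + r j ≤ |x i - x j|) (hrm : ∀ i, 2 ≤ r i * |m i|)
    {v : Fin 2 → R} (hv : ∀ i, r i * |v 1| < |v 0 - x i * v 1|) {w : FreeGroup ι}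
    (hw : FreeGroup.lift (fun i ↦ parabolic (x i) (m i)) w • v = v) : w = 1 := by
  refine freeGroup_eq_one_of_lift_smul_eq_of_ping_pong _ (fun i ↦ slopeInterval (x i) (r i))
    (fun i j hij n hn ↦ ?_) (fun i ↦ (hv i).not_gt)
    (fun i n hn ↦ parabolic_zpow_smul_mem_slopeInterval (hrm i) (hv i) hn) hw
  rintro _ ⟨u, hu, rfl⟩
  exact parabolic_zpow_smul_mem_slopeInterval (hrm i) (mul_abs_lt_of_mem_slopeInterval (hx hij) hu)
    hn

end Parabolic

theorem dMat_eq_parabolic : dMat = parabolic 0 2 := by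
  ext i j
  fin_cases i <;> fin_cases j <;> simp [dMat, coe_parabolic]

theorem semiconjBy_cMat_parabolic (x m : ℤ) :
    SemiconjBy cMat (parabolic x m) (parabolic (x + 2) m) := by
  refine Subtype.ext ?_
  rw [Matrix.SpecialLinearGroup.coe_mul, Matrix.SpecialLinearGroup.coe_mul, coe_parabolic,
    coe_parabolic, cMat, mul_fin_two, mul_fin_two]
  ring_nf

theorem semiconjBy_cMat_pow_parabolic (x m : ℤ) (k : ℕ) :
    SemiconjBy (cMat ^ k) (parabolic x m) (parabolic (x + 2 * k) m) := by
  induction k with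
  | zero => simp
  | succ k ih =>
    rw [pow_succ', Nat.cast_succ, mul_add_one, ← add_assoc]
    exact (semiconjBy_cMat_parabolic _ m).mul_left ih

theorem fHom_comp_alphaHom (l : ℕ) :
    fHom.comp (alphaHom l) =
      FreeGroup.lift fun i : Fin l ↦ parabolic (2 * ((i : ℤ) + 1)) 2 := by
  ext1 i
  have conj_eq := mul_inv_eq_iff_eq_mul.2 (semiconjBy_cMat_pow_parabolic 0 2 (i + 1)).eq
  simpa [fHom, alphaHom, dMat_eq_parabolic] using conj_eq

/-- For every `w ∈ F_l`, if the matrix `M = f(α(w))` fixes the column vector `(0, 1)ᵀ`,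
then `M` is the `2 × 2` identity matrix. -/
theorem fixes_basis_vector_implies_identity (l : ℕ) (w : FreeGroup (Fin l))
    (hM : ((fHom (alphaHom l w) : Matrix (Fin 2) (Fin 2) ℤ)).mulVec ![0, 1] = ![0, 1]) :
    ((fHom (alphaHom l w) : Matrix (Fin 2) (Fin 2) ℤ)) = 1 := by
  rw [← MonoidHom.comp_apply, fHom_comp_alphaHom] at hM
  have hw : w = 1 := fixes_basis_vector_implies_identity_general (r := 1)
    (fun i j hij ↦ by simp only [Pi.one_apply]; grind) (by simp) (fun i ↦ by simp; grind) hM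
  simp [hw]
end

section
/- Let F_l be the free group on generators z₁, …, z_l, let α : F_l → F₂ be the homomorphism with α(z_i) = c^i d c^{−i} into the free group F₂ on generators c, d, and let f : F₂ → SL(2, ℤ) be the homomorphism with f(c) = [[1, 2], [0, 1]] and f(d) = [[1, 0], [2, 1]]. For every w ∈ F_l, the bottom-right (2, 2) entry of the matrix f(α(w)) is congruent to 1 modulo 4. -/
/-!
For an ideal `I`, write an element of the congruence subgroup `Γ(I)` of `SL(n, R)` as `1 + M` with
`M` having entries in `I`. In `(1 + M) * (1 + N) = 1 + M + N + M * N` the last term has entries in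
`I ^ 2`, so each diagonal entry is multiplicative modulo `I ^ 2`. The transvections `f(c)` and
`f(d)` lie in `Γ(2)` and have diagonal entries `1`, so every element of the subgroup they generate
has diagonal entries congruent to `1` modulo `4`.
-/

theorem mul_apply_diag_sub_mul_mem {n R : Type*} [Fintype n] [Ring R] {I J : Ideal R}
    {A B : Matrix n n R} {i : n} (hA : ∀ j ≠ i, A i j ∈ I) (hB : ∀ j ≠ i, B j i ∈ J) :
    (A * B) i i - A i i * B i i ∈ I * J := by
  classical
  rw [Matrix.mul_apply, ← Finset.sum_erase_eq_sub (Finset.mem_univ i)]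
  refine Ideal.sum_mem _ fun j hj ↦ ?_
  have hji : j ≠ i := Finset.ne_of_mem_erase hj
  exact Ideal.mul_mem_mul (hA j hji) (hB j hji)

section CongruenceSubgroups

variable {n R : Type*} [Fintype n] [DecidableEq n] [CommRing R] (I : Ideal R)

/-- The principal congruence subgroup `Γ(I)` of `SL(n, R)`: the matrices that reduce to the identity
modulo the ideal `I`. For `R = ℤ`, `n = Fin 2` this is `CongruenceSubgroup.Gamma`. -/
def principalCongruenceSubgroup : Subgroup (Matrix.SpecialLinearGroup n R) :=
  (Matrix.SpecialLinearGroup.map (Ideal.Quotient.mk I)).ker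

variable {I}

theorem mem_principalCongruenceSubgroup {A : Matrix.SpecialLinearGroup n R} :
    A ∈ principalCongruenceSubgroup I ↔ ∀ i j, A i j - (1 : Matrix n n R) i j ∈ I := by
  rw [principalCongruenceSubgroup, MonoidHom.mem_ker, Matrix.SpecialLinearGroup.ext_iff]
  simp [← Ideal.Quotient.mk_eq_mk_iff_sub_mem, Matrix.one_apply, apply_ite (Ideal.Quotient.mk I)]

theorem apply_mem_of_mem_principalCongruenceSubgroup {A : Matrix.SpecialLinearGroup n R}
    (hA : A ∈ principalCongruenceSubgroup I) {i j : n} (hij : i ≠ j) : A i j ∈ I := by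
  simpa [Matrix.one_apply_ne hij] using mem_principalCongruenceSubgroup.mp hA i j

variable (I)

/-- The homomorphism from `Γ(I)` to the multiplicative monoid of `R ⧸ I ^ 2` sending a matrix to the
class of its `i`-th diagonal entry. -/
def diagEntryHom (i : n) :
    principalCongruenceSubgroup (n := n) I →* R ⧸ I ^ 2 where
  toFun A := Ideal.Quotient.mk (I ^ 2) (A.1 i i)
  map_one' := by simp
  map_mul' A B := by
    rw [← map_mul, Ideal.Quotient.mk_eq_mk_iff_sub_mem, sq]
    exact mul_apply_diag_sub_mul_mem
      (fun _ hj ↦ apply_mem_of_mem_principalCongruenceSubgroup A.2 hj.symm)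
      (fun _ hj ↦ apply_mem_of_mem_principalCongruenceSubgroup B.2 hj)

/-- The Sanov subgroup of `SL(n, R)` relative to the ideal `I`: the matrices that are congruent to
the identity modulo `I` and whose diagonal entries are congruent to `1` modulo `I ^ 2`. By Sanov's
theorem, for `n = Fin 2`, `R = ℤ` and `I = (2)` it is generated by `cMat` and `dMat`. -/
def sanovSubgroup : Subgroup (Matrix.SpecialLinearGroup n R) :=
  (⨅ i, (diagEntryHom (n := n) I i).ker).map (principalCongruenceSubgroup I).subtype

variable {I}

theorem mem_sanovSubgroup {A : Matrix.SpecialLinearGroup n R} :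
    A ∈ sanovSubgroup I ↔ A ∈ principalCongruenceSubgroup I ∧ ∀ i, A i i - 1 ∈ I ^ 2 := by
  simp [sanovSubgroup, diagEntryHom, Subgroup.mem_iInf, MonoidHom.mem_ker,
    ← Ideal.Quotient.mk_eq_mk_iff_sub_mem, and_comm]

theorem transvection_mem_sanovSubgroup {i j : n} (hij : i ≠ j) {b : R} (hb : b ∈ I) :
    Matrix.SpecialLinearGroup.transvection hij b ∈ sanovSubgroup I := by
  refine mem_sanovSubgroup.mpr ⟨mem_principalCongruenceSubgroup.mpr fun k l ↦ ?_, fun k ↦ ?_⟩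
  · by_cases hkl : i = k ∧ j = l <;>
      simp [Matrix.SpecialLinearGroup.transvection_coe, hkl, hb]
  · have hk : ¬(i = k ∧ j = k) := fun h ↦ hij (h.1.trans h.2.symm)
    simp [Matrix.SpecialLinearGroup.transvection_coe, hk]

end CongruenceSubgroups

theorem cMat_eq_transvection : cMat = Matrix.SpecialLinearGroup.transvection zero_ne_one 2 := by
  ext i j
  fin_cases i <;> fin_cases j <;> simp [cMat, Matrix.SpecialLinearGroup.transvection_coe]

theorem dMat_eq_transvection : dMat = Matrix.SpecialLinearGroup.transvection one_ne_zero 2 := by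
  ext i j
  fin_cases i <;> fin_cases j <;> simp [dMat, Matrix.SpecialLinearGroup.transvection_coe]

theorem fHom_range_le_sanovSubgroup : fHom.range ≤ sanovSubgroup (Ideal.span {2}) := by
  refine FreeGroup.range_lift_le ?_
  have two_mem : (2 : ℤ) ∈ Ideal.span {2} := Ideal.mem_span_singleton_self 2
  rintro _ ⟨_ | _, rfl⟩
  · simpa [cMat_eq_transvection] using transvection_mem_sanovSubgroup zero_ne_one two_mem
  · simpa [dMat_eq_transvection] using transvection_mem_sanovSubgroup one_ne_zero two_mem

theorem bottom_right_entry_congruent_one_mod_four_general (v : F2) (i : Fin 2) :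
    (fHom v : Matrix (Fin 2) (Fin 2) ℤ) i i ≡ 1 [ZMOD 4] := by
  have hv : fHom v ∈ sanovSubgroup (Ideal.span {2}) := fHom_range_le_sanovSubgroup ⟨v, rfl⟩
  have hdiag : fHom v i i - 1 ∈ Ideal.span {(2 : ℤ)} ^ 2 := (mem_sanovSubgroup.mp hv).2 i
  rw [Ideal.span_singleton_pow, Ideal.mem_span_singleton] at hdiag
  exact (Int.modEq_of_dvd hdiag).symm

/-- For every `w ∈ F_l`, the bottom-right entry of the matrix `f(α(w))` is congruent to `1`
modulo `4`. -/
theorem bottom_right_entry_congruent_one_mod_four (l : ℕ) (w : FreeGroup (Fin l)) :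
    ((fHom (alphaHom l w) : Matrix (Fin 2) (Fin 2) ℤ)) 1 1 ≡ 1 [ZMOD 4] := by
  exact bottom_right_entry_congruent_one_mod_four_general (alphaHom l w) 1
end
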